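/- Let H: T × B̂ → R be a smooth compactly supported Hamiltonian with H(t,w) > −π(1−|w|²) for all (t,w), and let D(H) ⊂ C^n be the associated starshaped domain whose boundary over C*×C^{n−1} is the image under Φ of the graph of H. Then vol(D(H)) = π^n/n! + (1/(n−1)!)·Cal(φ_H^1), where Cal denotes the Calabi invariant of the time-one Hamiltonian diffeomorphism of the unit ball B̂ ⊂ C^{n−1}. -/

import Mathlib

/-!
STATEMENT 3: For a smooth compactly supported Hamiltonian `H : 𝕋 × B̂ → ℝ` with
`H(t,w) > −π(1−|w|²)`, the starshaped domain `D(H) ⊆ ℂⁿ` satisfies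
`vol(D(H)) = πⁿ/n! + (1/(n−1)!)·Cal(φ_H¹)`.

Here `n = m+1`, `𝕋 = ℝ/ℤ` is modelled by 1-periodic functions of `t ∈ ℝ`, `B̂` is the
open unit ball of `ℂ^{n−1} = ℂᵐ`, and the Calabi invariant of the time-one map of `H`
is `Cal(φ_H¹) = ∫_{𝕋×B̂} H dt ∧ ω̂₀^{n−1} = (n−1)! ∫_{(0,1]×B̂} H dLeb`.
-/

open scoped Real ENNReal
open Metric MeasureTheory

noncomputable section

abbrev Cn (n : ℕ) := EuclideanSpace ℂ (Fin n)

def Omega (m : ℕ) : Set (ℝ × ℝ × Cn m) := {p | π * (‖p.2.2‖ ^ 2 - 1) < p.1}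

/-- The symplectomorphism `Φ(s,t,w) = e^{2πit}·(√(1 + s/π − |w|²), w)`. -/
def Phi (m : ℕ) (p : ℝ × ℝ × Cn m) : Cn (m + 1) :=
  (WithLp.equiv 2 (Fin (m + 1) → ℂ)).symm fun i =>
    Complex.exp (2 * π * p.2.1 * Complex.I) *
      Fin.cons (α := fun _ : Fin (m + 1) => ℂ)
        ((Real.sqrt (1 + p.1 / π - ‖p.2.2‖ ^ 2) : ℝ) : ℂ) (fun j => p.2.2 j) i

/-- The starshaped domain `D(H)`: the region below the `Φ`-lift of the graph of `H`,
completed by the slice `{z₁ = 0, |z| < 1}`. -/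
def DH (m : ℕ) (H : ℝ × Cn m → ℝ) : Set (Cn (m + 1)) :=
  Phi m '' {p | p ∈ Omega m ∧ ‖p.2.2‖ < 1 ∧ p.1 < H (p.2.1, p.2.2)} ∪
    {z | z 0 = 0 ∧ ‖z‖ < 1}

/-- The Lebesgue volume of a subset of `ℂⁿ`. -/
def vol (n : ℕ) (A : Set (Cn n)) : ℝ≥0∞ :=
  volume ((WithLp.equiv 2 (Fin n → ℂ)) '' A)

/-- The Calabi invariant `Cal(φ_H¹) = ∫_{𝕋×B̂} H dt ∧ ω̂₀^{m} = m! ∫_{(0,1]×B̂} H dLeb`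
of the time-one map of the Hamiltonian `H`. -/
def calabi (m : ℕ) (H : ℝ × Cn m → ℝ) : ℝ :=
  (Nat.factorial m : ℝ) *
    ∫ q in (Set.Ioc (0 : ℝ) 1 ×ˢ
        {w : Fin m → ℂ | ‖(WithLp.equiv 2 (Fin m → ℂ)).symm w‖ < 1}),
      H (q.1, (WithLp.equiv 2 (Fin m → ℂ)).symm q.2)

lemma radial_aux (c : ℝ) (hc : 0 < c) :
    ∫⁻ r in Set.Ioi (0:ℝ), ENNReal.ofReal r * ({r : ℝ | π * r ^ 2 < c}.indicator 1 r)
      = ENNReal.ofReal (c / (2 * π)) := by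
  have hpi := Real.pi_pos
  set R := Real.sqrt (c / π) with hR
  have hR0 : 0 ≤ R := Real.sqrt_nonneg _
  have hR2 : R ^ 2 = c / π := Real.sq_sqrt (by positivity)
  have hiff : ∀ r : ℝ, 0 < r → (π * r ^ 2 < c ↔ r < R) := by
    intro r hr
    rw [hR, Real.lt_sqrt hr.le, lt_div_iff₀ hpi, mul_comm]
  have h1 : ∫⁻ r in Set.Ioi (0:ℝ), ENNReal.ofReal r * ({r : ℝ | π * r ^ 2 < c}.indicator 1 r)
      = ∫⁻ r in Set.Ioi (0:ℝ), (Set.Iio R).indicator (fun r => ENNReal.ofReal r) r := by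
    refine setLIntegral_congr_fun measurableSet_Ioi (fun r hr => ?_)
    have := hiff r hr
    by_cases h : r < R
    · simp [Set.indicator, h, this.2 h]
    · have h' : ¬ (π * r ^ 2 < c) := fun hh => h (this.1 hh)
      simp [Set.indicator, h, h']
  rw [h1, setLIntegral_indicator measurableSet_Iio, Set.inter_comm, Set.Ioi_inter_Iio,
    ← ofReal_integral_eq_lintegral_ofReal, ← integral_Ioc_eq_integral_Ioo,
    ← intervalIntegral.integral_of_le hR0, integral_id, hR2]
  · congr 1
    field_simp
    ring
  · exact (continuous_id.integrableOn_Icc (a := 0) (b := R)).mono_set Set.Ioo_subset_Icc_self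
  · filter_upwards [ae_restrict_mem measurableSet_Ioo] with r hr
    exact hr.1.le

lemma area_aux (f : ℝ → ℝ) (hf : Continuous f) (hper : ∀ t, f (t + 1) = f t)
    (hpos : ∀ t, 0 < f t) :
    volume {u : ℂ | π * ‖u‖ ^ 2 < f (Complex.arg u / (2 * π))}
      = ENNReal.ofReal (∫ t in (0:ℝ)..1, f t) := by
  have hpi := Real.pi_pos
  have hm : MeasurableSet {u : ℂ | π * ‖u‖ ^ 2 < f (Complex.arg u / (2 * π))} := by
    refine measurableSet_lt (by fun_prop) ?_
    exact hf.measurable.comp (Complex.measurable_arg.div_const _)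
  rw [← lintegral_indicator_one hm, ← Complex.lintegral_comp_polarCoord_symm]
  have h1 : ∫⁻ p in polarCoord.target, ENNReal.ofReal p.1 •
        ({u : ℂ | π * ‖u‖ ^ 2 < f (Complex.arg u / (2 * π))}.indicator 1
          (Complex.polarCoord.symm p) : ℝ≥0∞)
      = ∫⁻ p in Set.Ioi (0:ℝ) ×ˢ Set.Ioo (-π) π, ENNReal.ofReal p.1 *
        ({p : ℝ × ℝ | π * p.1 ^ 2 < f (p.2 / (2 * π))}.indicator 1 p) := by
    refine setLIntegral_congr_fun (measurableSet_Ioi.prod measurableSet_Ioo) (fun p hp => ?_)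
    obtain ⟨hp1, hp2⟩ := hp
    have ha : Complex.arg (Complex.polarCoord.symm p) = p.2 := by
      rw [Complex.polarCoord_symm_apply]
      have := Complex.arg_mul_cos_add_sin_mul_I (r := p.1) hp1 (θ := p.2) ⟨hp2.1, hp2.2.le⟩
      simpa using this
    have hn : ‖Complex.polarCoord.symm p‖ = p.1 := by
      rw [Complex.norm_polarCoord_symm, abs_of_pos hp1]
    simp only [smul_eq_mul, Set.indicator, Set.mem_ofPred_eq, ha, hn, Pi.one_apply]
  have hm2 : MeasurableSet {p : ℝ × ℝ | π * p.1 ^ 2 < f (p.2 / (2 * π))} := by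
    refine measurableSet_lt (by fun_prop) ?_
    exact hf.measurable.comp (measurable_snd.div_const _)
  rw [h1, Measure.volume_eq_prod, ← Measure.prod_restrict, lintegral_prod_symm]
  swap
  · refine AEMeasurable.mul (by fun_prop) ?_
    exact (measurable_one.indicator hm2).aemeasurable
  have h2 : ∀ θ : ℝ, ∫⁻ r in Set.Ioi (0:ℝ), ENNReal.ofReal (r, θ).1 *
        ({p : ℝ × ℝ | π * p.1 ^ 2 < f (p.2 / (2 * π))}.indicator 1 (r, θ))
        = ENNReal.ofReal (f (θ / (2 * π)) / (2 * π)) := by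
    intro θ
    rw [← radial_aux _ (hpos _)]
    rfl
  simp_rw [h2]
  rw [← ofReal_integral_eq_lintegral_ofReal, ← integral_Ioc_eq_integral_Ioo,
    ← intervalIntegral.integral_of_le (by linarith), intervalIntegral.integral_div,
    intervalIntegral.integral_comp_div _ (by positivity)]
  · congr 1
    have e := Function.Periodic.intervalIntegral_add_eq (f := f) (T := 1) hper (-π / (2 * π)) 0
    have e1 : -π / (2 * π) + 1 = π / (2 * π) := by field_simp; norm_num
    rw [e1, zero_add] at e
    rw [e, smul_eq_mul]
    field_simp
  · refine (Continuous.integrableOn_Icc (a := -π) (b := π) ?_).mono_set Set.Ioo_subset_Icc_self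
    fun_prop
  · exact Filter.Eventually.of_forall fun θ => by have := hpos (θ / (2 * π)); positivity

lemma rot_aux (m : ℕ) (c : ℂ) (hc : ‖c‖ = 1) :
    MeasurePreserving (fun w : Fin m → ℂ => c • w) := by
  have hc0 : c ≠ 0 := by intro h; simp [h] at hc
  have : MeasurePreserving (fun z : ℂ => c * z) := by
    have := (rotation ⟨c, by simp [Submonoid.unitSphere, hc]⟩).measurePreserving
    exact this
  exact volume_preserving_pi (fun _ : Fin m => this)

/-- squared euclidean norm -/
lemma norm_sq_aux (m : ℕ) (w : Fin m → ℂ) :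
    ‖(WithLp.equiv 2 (Fin m → ℂ)).symm w‖ ^ 2 = ∑ i, ‖w i‖ ^ 2 := by
  rw [EuclideanSpace.norm_sq_eq]; rfl

lemma ball_aux (n : ℕ) : volume {x : Fin n → ℂ | ∑ i, ‖x i‖ ^ 2 < 1}
    = ENNReal.ofReal (π ^ n / (Nat.factorial n : ℝ)) := by
  have := Complex.volume_sum_rpow_lt_one (Fin n) (p := 2) (by norm_num)
  simp only [Real.rpow_two] at this
  rw [this]
  have h2 : Real.Gamma (2 / 2 + 1) = 1 := by norm_num
  have h3 : Real.Gamma (2 * (Fintype.card (Fin n)) / 2 + 1) = (Nat.factorial n : ℝ) := by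
    rw [← Real.Gamma_nat_eq_factorial]; simp
  rw [h2, h3]; simp

def Bm (m : ℕ) : Set (Fin m → ℂ) := {w | ∑ i, ‖w i‖ ^ 2 < 1}

lemma Bm_meas (m : ℕ) : MeasurableSet (Bm m) :=
  measurableSet_lt (by fun_prop) measurable_const

lemma Bm_sub (m : ℕ) : Bm m ⊆ Metric.closedBall 0 1 := by
  intro w hw
  rw [mem_closedBall_zero_iff, pi_norm_le_iff_of_nonneg zero_le_one]
  intro i
  have h1 : ‖w i‖ ^ 2 ≤ ∑ i, ‖w i‖ ^ 2 :=
    Finset.single_le_sum (f := fun i => ‖w i‖ ^ 2) (fun _ _ => by positivity) (Finset.mem_univ i)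
  have h2 : ∑ i, ‖w i‖ ^ 2 < 1 := hw
  nlinarith [norm_nonneg (w i)]

lemma Bm_int (m : ℕ) (g : (Fin m → ℂ) → ℝ) (hg : Continuous g) : IntegrableOn g (Bm m) :=
  (hg.continuousOn.integrableOn_compact (isCompact_closedBall 0 1)).mono_set (Bm_sub m)

lemma par_cont (m : ℕ) (K : ℝ × (Fin m → ℂ) → ℝ) (hK : Continuous K) :
    Continuous fun w => ∫ t in (0:ℝ)..1, K (t, w) := by
  apply intervalIntegral.continuous_parametric_intervalIntegral_of_continuous'
  exact hK.comp continuous_swap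

lemma volS_aux (m : ℕ) (K : ℝ × (Fin m → ℂ) → ℝ) (hK : Continuous K)
    (hper : ∀ t w, K (t + 1, w) = K (t, w)) (hpos : ∀ t w, w ∈ Bm m → 0 < K (t, w)) :
    MeasurableSet {p : ℂ × (Fin m → ℂ) | p.2 ∈ Bm m ∧
      π * ‖p.1‖ ^ 2 < K (Complex.arg p.1 / (2 * π), p.2)} ∧
    volume {p : ℂ × (Fin m → ℂ) | p.2 ∈ Bm m ∧
      π * ‖p.1‖ ^ 2 < K (Complex.arg p.1 / (2 * π), p.2)}
      = ENNReal.ofReal (∫ w in Bm m, ∫ t in (0:ℝ)..1, K (t, w)) := by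
  have hm : MeasurableSet {p : ℂ × (Fin m → ℂ) | p.2 ∈ Bm m ∧
      π * ‖p.1‖ ^ 2 < K (Complex.arg p.1 / (2 * π), p.2)} := by
    refine MeasurableSet.inter (measurable_snd (Bm_meas m)) (measurableSet_lt
      (f := fun p : ℂ × (Fin m → ℂ) => π * ‖p.1‖ ^ 2) (by fun_prop) ?_)
    refine hK.measurable.comp (Measurable.prodMk ?_ measurable_snd)
    exact (Complex.measurable_arg.comp measurable_fst).div_const _
  refine ⟨hm, ?_⟩
  rw [Measure.volume_eq_prod, Measure.prod_apply_symm hm,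
    ofReal_integral_eq_lintegral_ofReal (Bm_int m _ (par_cont m K hK)),
    ← lintegral_indicator (Bm_meas m)]
  · refine lintegral_congr fun w => ?_
    by_cases hw : w ∈ Bm m
    · rw [Set.indicator_of_mem hw, ← area_aux (fun t => K (t, w)) (by fun_prop)
        (fun t => hper t w) (fun t => hpos t w hw)]
      congr 1
      ext u
      simp [hw]
    · rw [Set.indicator_of_notMem hw]
      convert measure_empty (μ := (volume : Measure ℂ))
      ext u
      simp [hw]
  · filter_upwards [ae_restrict_mem (Bm_meas m)] with w hw
    exact intervalIntegral.integral_nonneg zero_le_one fun t _ => (hpos t w hw).le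

lemma K0_aux (m : ℕ) : ∫ w in Bm m, ∫ _t in (0:ℝ)..1, π * (1 - ∑ i, ‖w i‖ ^ 2)
    = π ^ (m + 1) / (Nat.factorial (m + 1) : ℝ) := by
  have hpi := Real.pi_pos
  have h := (volS_aux m (fun p => π * (1 - ∑ i, ‖p.2 i‖ ^ 2)) (by fun_prop) (fun _ _ => rfl)
    (fun t w hw => by have : ∑ i, ‖w i‖ ^ 2 < 1 := hw; exact mul_pos hpi (by linarith))).2
  have e := volume_preserving_piFinSuccAbove (fun _ : Fin (m + 1) => ℂ) 0
  rw [← e.measure_preimage_equiv] at h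
  have h2 : (MeasurableEquiv.piFinSuccAbove (fun _ : Fin (m + 1) => ℂ) 0) ⁻¹'
      {p : ℂ × (Fin m → ℂ) | p.2 ∈ Bm m ∧ π * ‖p.1‖ ^ 2 < π * (1 - ∑ i, ‖p.2 i‖ ^ 2)}
      = {x : Fin (m + 1) → ℂ | ∑ i, ‖x i‖ ^ 2 < 1} := by
    ext x
    simp only [Set.mem_preimage, Set.mem_ofPred_eq, Bm, Fin.sum_univ_succ]
    have h0 : ∀ i, ((MeasurableEquiv.piFinSuccAbove (fun _ : Fin (m + 1) => ℂ) 0) x).2 i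
      = x i.succ := fun i => rfl
    have h1 : ((MeasurableEquiv.piFinSuccAbove (fun _ : Fin (m + 1) => ℂ) 0) x).1 = x 0 := rfl
    simp only [h0, h1, mul_lt_mul_iff_right₀ hpi]
    constructor
    · rintro ⟨_, h⟩; linarith
    · intro h; exact ⟨by nlinarith [sq_nonneg ‖x 0‖], by linarith⟩
  rw [h2, ball_aux] at h
  refine ((ENNReal.ofReal_eq_ofReal_iff (by positivity) ?_).1 h).symm
  refine setIntegral_nonneg (Bm_meas m) fun w hw => ?_
  have : ∑ i, ‖w i‖ ^ 2 < 1 := hw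
  exact intervalIntegral.integral_nonneg zero_le_one fun t _ => mul_nonneg hpi.le (by linarith)

lemma skew_aux (m : ℕ) : MeasurePreserving (fun p : ℂ × (Fin m → ℂ) =>
    (p.1, Complex.exp (-(Complex.arg p.1) * Complex.I) • p.2)) := by
  refine MeasurePreserving.skew_product (g := fun (u : ℂ) (w : Fin m → ℂ) =>
    Complex.exp (-(Complex.arg u) * Complex.I) • w) (MeasurePreserving.id volume) ?_ ?_
  · have : Measurable fun p : ℂ × (Fin m → ℂ) =>
        Complex.exp (-(Complex.arg p.1) * Complex.I) := by fun_prop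
    exact this.smul measurable_snd
  · refine Filter.Eventually.of_forall fun u => (rot_aux m _ ?_).map_eq
    have := Complex.norm_exp_ofReal_mul_I (-(Complex.arg u))
    simpa using this

lemma volT_aux (m : ℕ) (K : ℝ × (Fin m → ℂ) → ℝ) (hK : Continuous K)
    (hper : ∀ t w, K (t + 1, w) = K (t, w)) (hpos : ∀ t w, w ∈ Bm m → 0 < K (t, w)) :
    volume {x : Fin (m + 1) → ℂ |
      Complex.exp (-(Complex.arg (x 0)) * Complex.I) • (fun j : Fin m => x j.succ) ∈ Bm m ∧
      π * ‖x 0‖ ^ 2 < K (Complex.arg (x 0) / (2 * π),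
        Complex.exp (-(Complex.arg (x 0)) * Complex.I) • (fun j : Fin m => x j.succ))}
      = ENNReal.ofReal (∫ w in Bm m, ∫ t in (0:ℝ)..1, K (t, w)) := by
  obtain ⟨hm, hv⟩ := volS_aux m K hK hper hpos
  have e := volume_preserving_piFinSuccAbove (fun _ : Fin (m + 1) => ℂ) 0
  have e2 := (skew_aux m).comp e
  rw [← hv, ← e2.measure_preimage hm.nullMeasurableSet]
  rfl

lemma null_aux (m : ℕ) : ∀ᵐ x : Fin (m + 1) → ℂ, x 0 ≠ 0 := by
  rw [ae_iff]
  have e := volume_preserving_piFinSuccAbove (fun _ : Fin (m + 1) => ℂ) 0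
  have : {x : Fin (m + 1) → ℂ | ¬ x 0 ≠ 0} =
    (MeasurableEquiv.piFinSuccAbove (fun _ : Fin (m + 1) => ℂ) 0) ⁻¹' ({0} ×ˢ Set.univ) := by
    ext x
    simp [MeasurableEquiv.piFinSuccAbove]
  rw [this, e.measure_preimage_equiv, Measure.volume_eq_prod, Measure.prod_prod]
  simp

lemma mem_DH_aux (m : ℕ) (H : ℝ × Cn m → ℝ)
    (hper : ∀ (t : ℝ) (w : Cn m), H (t + 1, w) = H (t, w))
    (x : Fin (m + 1) → ℂ) (hx : x 0 ≠ 0) :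
    x ∈ (WithLp.equiv 2 (Fin (m + 1) → ℂ)) '' DH m H ↔
      (Complex.exp (-(Complex.arg (x 0)) * Complex.I) • (fun j : Fin m => x j.succ) ∈ Bm m ∧
      π * ‖x 0‖ ^ 2 < (fun p : ℝ × (Fin m → ℂ) => π * (1 - ∑ i, ‖p.2 i‖ ^ 2) +
          H (p.1, (WithLp.equiv 2 (Fin m → ℂ)).symm p.2)) (Complex.arg (x 0) / (2 * π),
        Complex.exp (-(Complex.arg (x 0)) * Complex.I) • (fun j : Fin m => x j.succ))) := by
  have hpi := Real.pi_pos
  have hperZ : ∀ (k : ℤ) (t : ℝ) (w : Cn m), H (t + k, w) = H (t, w) := by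
    intro k t w
    have hp : Function.Periodic (fun t => H (t, w)) 1 := fun t => hper t w
    simpa using (hp.int_mul k) t
  have hball : ∀ w : Fin m → ℂ, w ∈ Bm m ↔ ‖(WithLp.equiv 2 (Fin m → ℂ)).symm w‖ < 1 := by
    intro w
    rw [Bm, Set.mem_ofPred_eq, ← norm_sq_aux, sq_lt_one_iff₀ (norm_nonneg _)]
  have hE : Complex.exp (Complex.arg (x 0) * Complex.I) *
      Complex.exp (-(Complex.arg (x 0)) * Complex.I) = 1 := by
    rw [← Complex.exp_add]; simp
  have hpol := Complex.norm_mul_exp_arg_mul_I (x 0)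
  have hn0 : 0 < ‖x 0‖ := norm_pos_iff.2 hx
  simp only [← norm_sq_aux, hball]
  constructor
  · rintro ⟨z, hz, rfl⟩
    rcases hz with ⟨⟨s, t, w⟩, ⟨hO, hw, hs⟩, rfl⟩ | ⟨hz, _⟩
    swap
    · exact absurd hz hx
    simp only [Omega, Set.mem_ofPred_eq] at hO hw hs
    set x := (WithLp.equiv 2 (Fin (m + 1) → ℂ)) (Phi m (s, t, w)) with hxdef
    have hrpos : 0 < 1 + s / π - ‖w‖ ^ 2 := by
      have : ‖w‖ ^ 2 - 1 < s / π := by rw [lt_div_iff₀ hpi]; linarith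
      linarith
    set r := Real.sqrt (1 + s / π - ‖w‖ ^ 2) with hr
    have hr0 : 0 < r := Real.sqrt_pos.2 hrpos
    have hr2 : r ^ 2 = 1 + s / π - ‖w‖ ^ 2 := Real.sq_sqrt hrpos.le
    have hx0 : x 0 = Complex.exp (2 * π * t * Complex.I) * (r : ℂ) := rfl
    have hxs : ∀ j : Fin m, x j.succ = Complex.exp (2 * π * t * Complex.I) * w j := fun _ => rfl
    have hnE : ‖Complex.exp (2 * π * t * Complex.I)‖ = 1 := by
      have := Complex.norm_exp_ofReal_mul_I (2 * π * t)
      simpa using this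
    have hnx : ‖x 0‖ = r := by
      rw [hx0, norm_mul, hnE, one_mul, Complex.norm_real, Real.norm_of_nonneg hr0.le]
    have hEE : Complex.exp (Complex.arg (x 0) * Complex.I) = Complex.exp (2 * π * t * Complex.I) := by
      rw [hnx] at hpol
      have hrc : (r : ℂ) ≠ 0 := by exact_mod_cast hr0.ne'
      apply mul_left_cancel₀ hrc
      rw [hpol, hx0, mul_comm]
    have hweq : (WithLp.equiv 2 (Fin m → ℂ)).symm
        (Complex.exp (-(Complex.arg (x 0)) * Complex.I) • (fun j : Fin m => x j.succ)) = w := by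
      ext j
      change Complex.exp (-(Complex.arg (x 0)) * Complex.I) * x j.succ = w j
      rw [hxs, ← hEE, ← mul_assoc, mul_comm (Complex.exp _), hE, one_mul]
    obtain ⟨k, hk⟩ := Complex.exp_eq_exp_iff_exists_int.1 hEE
    have hk' : Complex.arg (x 0) / (2 * π) = t + k := by
      have h1 : ((Complex.arg (x 0) : ℝ) : ℂ) = ((2 * π * t + k * (2 * π) : ℝ) : ℂ) := by
        apply mul_right_cancel₀ Complex.I_ne_zero
        rw [hk]; push_cast; ring
      have h2 := Complex.ofReal_injective h1
      rw [h2]; field_simp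
    rw [hweq]
    refine ⟨hw, ?_⟩
    rw [hk', hperZ, hnx, hr2]
    have : π * (1 + s / π - ‖w‖ ^ 2) = s + π * (1 - ‖w‖ ^ 2) := by field_simp; ring
    linarith
  · rintro ⟨h1, h2⟩
    set w := (WithLp.equiv 2 (Fin m → ℂ)).symm
        (Complex.exp (-(Complex.arg (x 0)) * Complex.I) • (fun j : Fin m => x j.succ)) with hw
    refine ⟨(WithLp.equiv 2 (Fin (m + 1) → ℂ)).symm x, Or.inl
      ⟨(π * (‖x 0‖ ^ 2 + ‖w‖ ^ 2 - 1), Complex.arg (x 0) / (2 * π), w), ⟨?_, h1, ?_⟩, ?_⟩, by simp⟩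
    · simp only [Omega, Set.mem_ofPred_eq]
      have : 0 < ‖x 0‖ ^ 2 := by positivity
      nlinarith
    · simp only
      nlinarith
    · have hr : Real.sqrt (1 + (π * (‖x 0‖ ^ 2 + ‖w‖ ^ 2 - 1)) / π - ‖w‖ ^ 2) = ‖x 0‖ := by
        rw [mul_div_cancel_left₀ _ hpi.ne']
        rw [show 1 + (‖x 0‖ ^ 2 + ‖w‖ ^ 2 - 1) - ‖w‖ ^ 2 = ‖x 0‖ ^ 2 by ring,
          Real.sqrt_sq hn0.le]
      have hEt : Complex.exp (2 * π * ((Complex.arg (x 0) / (2 * π) : ℝ) : ℂ) * Complex.I)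
          = Complex.exp (Complex.arg (x 0) * Complex.I) := by
        have hpc : (π : ℂ) ≠ 0 := by exact_mod_cast hpi.ne'
        congr 2
        push_cast; field_simp
      simp only [Phi]
      rw [hr, hEt]
      congr 1
      funext i
      refine Fin.cases ?_ (fun j => ?_) i
      · rw [Fin.cons_zero, mul_comm, hpol]
      · rw [Fin.cons_succ]
        change _ * (Complex.exp (-(Complex.arg (x 0)) * Complex.I) * x j.succ) = _
        rw [← mul_assoc, hE, one_mul]

/-- `vol(D(H)) = πⁿ/n! + Cal(φ_H¹)/(n−1)! = vol(B) + Cal(φ_H¹)/(n−1)!`. -/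
theorem vol_DH (m : ℕ) (H : ℝ × Cn m → ℝ)
    (hsmooth : ContDiff ℝ (⊤ : ℕ∞) H)
    (hper : ∀ (t : ℝ) (w : Cn m), H (t + 1, w) = H (t, w))
    (hsupp : ∃ ρ : ℝ, ρ < 1 ∧ ∀ (t : ℝ) (w : Cn m), ρ ≤ ‖w‖ → H (t, w) = 0)
    (hbound : ∀ (t : ℝ) (w : Cn m), ‖w‖ < 1 → -(π * (1 - ‖w‖ ^ 2)) < H (t, w)) :
    (vol (m + 1) (DH m H)).toReal =
      π ^ (m + 1) / (Nat.factorial (m + 1) : ℝ)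
        + (1 / (Nat.factorial m : ℝ)) * calabi m H := by
  have hpi := Real.pi_pos
  have hHc : Continuous fun p : ℝ × (Fin m → ℂ) =>
      H (p.1, (WithLp.equiv 2 (Fin m → ℂ)).symm p.2) := by
    refine hsmooth.continuous.comp (continuous_fst.prodMk ?_)
    exact (PiLp.continuous_toLp 2 _).comp continuous_snd
  have hball : {w : Fin m → ℂ | ‖(WithLp.equiv 2 (Fin m → ℂ)).symm w‖ < 1} = Bm m := by
    ext w
    rw [Bm, Set.mem_ofPred_eq, Set.mem_ofPred_eq, ← norm_sq_aux, sq_lt_one_iff₀ (norm_nonneg _)]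
  have hT := volT_aux m (fun p : ℝ × (Fin m → ℂ) => π * (1 - ∑ i, ‖p.2 i‖ ^ 2) +
          H (p.1, (WithLp.equiv 2 (Fin m → ℂ)).symm p.2))
    ((by fun_prop : Continuous fun p : ℝ × (Fin m → ℂ) => π * (1 - ∑ i, ‖p.2 i‖ ^ 2)).add hHc)
    (fun t w => by simp only [hper])
    (fun t w hw => by
      rw [← hball] at hw
      have := hbound t _ hw
      simp only [← norm_sq_aux]
      linarith)
  have hvol : vol (m + 1) (DH m H) = ENNReal.ofReal (∫ w in Bm m, ∫ t in (0:ℝ)..1,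
      (π * (1 - ∑ i, ‖w i‖ ^ 2) + H (t, (WithLp.equiv 2 (Fin m → ℂ)).symm w))) := by
    refine Eq.trans ?_ hT
    refine measure_congr ?_
    filter_upwards [null_aux m] with x hx
    exact propext (mem_DH_aux m H hper x hx)
  have hsplit : ∫ w in Bm m, ∫ t in (0:ℝ)..1, (π * (1 - ∑ i, ‖w i‖ ^ 2) +
          H (t, (WithLp.equiv 2 (Fin m → ℂ)).symm w))
      = π ^ (m + 1) / (Nat.factorial (m + 1) : ℝ) +
        ∫ w in Bm m, ∫ t in (0:ℝ)..1, H (t, (WithLp.equiv 2 (Fin m → ℂ)).symm w) := by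
    rw [← K0_aux, ← integral_add]
    · refine integral_congr_ae (Filter.Eventually.of_forall fun w => ?_)
      refine intervalIntegral.integral_add (by simp) ?_
      exact Continuous.intervalIntegrable (hHc.comp (by fun_prop : Continuous fun t : ℝ => (t, w)))
        _ _
    · exact Bm_int m _ (par_cont m (fun p => π * (1 - ∑ i, ‖p.2 i‖ ^ 2)) (by fun_prop))
    · exact Bm_int m _ (par_cont m _ hHc)
  have hcal : (1 / (Nat.factorial m : ℝ)) * calabi m H =
      ∫ w in Bm m, ∫ t in (0:ℝ)..1, H (t, (WithLp.equiv 2 (Fin m → ℂ)).symm w) := by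
    have hfac : (Nat.factorial m : ℝ) ≠ 0 := by positivity
    rw [calabi, ← mul_assoc, one_div, inv_mul_cancel₀ hfac, one_mul, hball,
      Measure.volume_eq_prod, ← Measure.prod_restrict, integral_prod_symm]
    · simp only [intervalIntegral.integral_of_le zero_le_one]
    · rw [Measure.prod_restrict]
      refine (hHc.continuousOn.integrableOn_compact
        ((isCompact_Icc (a := (0:ℝ)) (b := 1)).prod (isCompact_closedBall 0 1))).mono_set ?_
      exact Set.prod_mono Set.Ioc_subset_Icc_self (Bm_sub m)
  rw [hvol, hcal, ← hsplit]
  refine ENNReal.toReal_ofReal ?_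
  refine setIntegral_nonneg (Bm_meas m) fun w hw => ?_
  refine intervalIntegral.integral_nonneg zero_le_one fun t _ => ?_
  rw [← hball] at hw
  have := hbound t _ hw
  simp only [← norm_sq_aux]
  linarith

end
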